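/- Let d = 3, δ ∈ (1,2), λ > 0 with δλ ∈ (0,2), and let z > 0. Then the improper radial Fourier transform \widehat{D}_3(z) := (1/(2π² z)) · lim_{T→∞} ∫₀^T r sin(z r) D_{λ,δ}(r) dr exists and equals −(1/(2π² z)) · Im ∫₀^∞ e^{−z t} · t · ( 1 − e^{iπδλ/2} t^{δλ} / (1 + e^{iπδ/2} t^{δ})^{λ} ) dt. (This is the case d = 3 of the Bessel-K representation of the Dagum isotropic spectral density, where K_{1/2}(x) = √(π/(2x)) e^{−x} reduces the kernel to an exponential.) -/

import Mathlib

open MeasureTheory Set Filter intervalIntegral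

/-- The Dagum function with parameters `lam > 0`, `δ > 0`:
`D_{λ,δ}(r) = 1 - (r^δ/(1+r^δ))^λ`. -/
noncomputable def dagum (lam δ r : ℝ) : ℝ := 1 - (r ^ δ / (1 + r ^ δ)) ^ lam

/-- The Dagum integrand rotated to the positive imaginary axis:
`1 - e^{iπδλ/2} t^{δλ} / (1 + e^{iπδ/2} t^δ)^λ`, principal branch powers. -/
noncomputable def dagumRot (lam δ : ℝ) (t : ℝ) : ℂ :=
  1 - Complex.exp (Complex.I * Real.pi * (δ * lam) / 2) * (t : ℂ) ^ ((δ * lam : ℝ) : ℂ) /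
      (1 + Complex.exp (Complex.I * Real.pi * δ / 2) * (t : ℂ) ^ ((δ : ℝ) : ℂ)) ^ ((lam : ℝ) : ℂ)

/-! The integral `∫₀^T r sin(zr) D(r) dr` is the imaginary part of `∫₀^T e^{izw} w D(w) dw` along
the real axis. The Dagum function is holomorphic on the open first quadrant and continuous on the
closed one, so Cauchy's theorem on the square with corners `0` and `T + iT` moves this integral to
the imaginary axis, where `e^{izw}` decays exponentially. Since `D(w) = O(|w|^{-δ})` with `δ > 1`,
`w D(w)` tends to `0` at infinity, and a Jordan-type estimate makes the contributions of the two
remaining sides vanish. -/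

section QuadrantRotation

open Asymptotics Bornology Complex
open scoped Topology

lemma eventually_forall_norm_le_of_tendsto_cobounded {V F : Type*} [SeminormedAddCommGroup V]
    [SeminormedAddCommGroup F] {g : V → F} {s : Set V}
    (hg : Tendsto g (cobounded V ⊓ 𝓟 s) (𝓝 0)) {ε : ℝ} (hε : 0 < ε) :
    ∀ᶠ R : ℝ in atTop, ∀ w ∈ s, R ≤ ‖w‖ → ‖g w‖ ≤ ε := by
  have hsmall := hg.eventually (eventually_norm_sub_lt 0 hε)
  obtain ⟨R₀, -, hR₀⟩ := (hasBasis_cobounded_norm.inf_principal s).eventually_iff.1 hsmall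
  filter_upwards [eventually_ge_atTop R₀] with R hR w hw hwR
  simpa using (hR₀ ⟨hR.trans hwR, hw⟩).le

variable {E : Type*} [NormedAddCommGroup E] [NormedSpace ℂ E] {f g : ℂ → E} {z : ℝ}

lemma norm_cexp_I_mul_smul (z : ℝ) (w : ℂ) (v : E) :
    ‖cexp (I * z * w) • v‖ = Real.exp (-(z * w.im)) * ‖v‖ := by
  simp [norm_smul, Complex.norm_exp]

lemma intervalIntegral_eq_of_differentiableOn_quadrant
    (hc : ContinuousOn f (Ici 0 ×ℂ Ici 0)) (hd : DifferentiableOn ℂ f (Ioi 0 ×ℂ Ioi 0))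
    {T : ℝ} (hT : 0 ≤ T) :
    ∫ x in (0 : ℝ)..T, f x = I • (∫ y in (0 : ℝ)..T, f (y * I)) +
      ((∫ x in (0 : ℝ)..T, f (x + T * I)) - I • ∫ y in (0 : ℝ)..T, f (T + y * I)) := by
  have hrect := integral_boundary_rect_eq_zero_of_continuousOn_of_differentiableOn f 0 (T + T * I)
    (hc.mono fun w hw => ?_) (hd.mono fun w hw => ?_)
  · simp only [zero_re, zero_im, add_re, add_im, mul_re, mul_im, ofReal_re, ofReal_im, I_re, I_im,
      mul_zero, mul_one, sub_zero, add_zero, zero_add, ofReal_zero, zero_mul] at hrect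
    rw [← sub_eq_zero, ← hrect]
    abel
  · simp_all [mem_reProdIm, uIcc_of_le]
  · simp_all [mem_reProdIm]

lemma tendsto_integral_cexp_smul_top_side (hz : 0 < z)
    (hg0 : Tendsto g (cobounded ℂ ⊓ 𝓟 (Ici 0 ×ℂ Ici 0)) (𝓝 0)) :
    Tendsto (fun T : ℝ => ∫ x in (0 : ℝ)..T, cexp (I * z * (x + T * I)) • g (x + T * I))
      atTop (𝓝 0) := by
  rw [← isLittleO_const_iff (inv_pos.2 hz).ne']
  refine .of_bound fun ε hε => ?_
  filter_upwards [eventually_forall_norm_le_of_tendsto_cobounded hg0 hε, eventually_ge_atTop 0]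
    with T hsmall hT
  have hside : ∀ x ∈ uIoc 0 T, ‖cexp (I * z * (x + T * I)) • g (x + T * I)‖ ≤
      Real.exp (-(z * T)) * ε := by
    intro x hx
    rw [uIoc_of_le hT] at hx
    rw [norm_cexp_I_mul_smul]
    have hw : T ≤ ‖(x + T * I : ℂ)‖ := by simpa using im_le_norm (x + T * I : ℂ)
    have := hsmall (x + T * I) (by simp [mem_reProdIm, hx.1.le, hT]) hw
    simpa using mul_le_mul_of_nonneg_left this (Real.exp_pos (-(z * T))).le
  have hexp : z * T * Real.exp (-(z * T)) ≤ 1 := by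
    rw [Real.exp_neg, ← div_eq_mul_inv, div_le_one (Real.exp_pos _)]
    linarith [Real.add_one_le_exp (z * T)]
  calc _ ≤ Real.exp (-(z * T)) * ε * |T - 0| :=
        intervalIntegral.norm_integral_le_of_norm_le_const hside
    _ = ε * (z * T * Real.exp (-(z * T))) * z⁻¹ := by
        rw [sub_zero, abs_of_nonneg hT]
        field_simp
    _ ≤ ε * 1 * z⁻¹ := by gcongr
    _ = ε * ‖z⁻¹‖ := by rw [mul_one, Real.norm_of_nonneg (inv_pos.2 hz).le]

lemma tendsto_integral_cexp_smul_right_side (hz : 0 < z)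
    (hg0 : Tendsto g (cobounded ℂ ⊓ 𝓟 (Ici 0 ×ℂ Ici 0)) (𝓝 0)) :
    Tendsto (fun T : ℝ => ∫ y in (0 : ℝ)..T, cexp (I * z * (T + y * I)) • g (T + y * I))
      atTop (𝓝 0) := by
  rw [← isLittleO_const_iff (inv_pos.2 hz).ne']
  refine .of_bound fun ε hε => ?_
  filter_upwards [eventually_forall_norm_le_of_tendsto_cobounded hg0 hε, eventually_ge_atTop 0]
    with T hsmall hT
  have hside : ∀ y ∈ Ioc 0 T, ‖cexp (I * z * (T + y * I)) • g (T + y * I)‖ ≤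
      Real.exp (-(z * y)) * ε := by
    intro y hy
    rw [norm_cexp_I_mul_smul]
    have hw : T ≤ ‖(T + y * I : ℂ)‖ := by simpa using re_le_norm (T + y * I : ℂ)
    have := hsmall (T + y * I) (by simp [mem_reProdIm, hy.1.le, hT]) hw
    simpa using mul_le_mul_of_nonneg_left this (Real.exp_pos (-(z * y))).le
  have hexp : ∫ y in (0 : ℝ)..T, Real.exp (-(z * y)) ≤ z⁻¹ := by
    simp_rw [← neg_mul]
    rw [intervalIntegral.integral_comp_mul_left (fun x => Real.exp x) (neg_ne_zero.2 hz.ne'),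
      integral_exp, smul_eq_mul, mul_zero, Real.exp_zero, inv_neg]
    nlinarith [Real.exp_pos (-z * T), inv_pos.2 hz]
  calc _ ≤ ∫ y in (0 : ℝ)..T, Real.exp (-(z * y)) * ε :=
        intervalIntegral.norm_integral_le_of_norm_le hT (.of_forall hside)
          (Continuous.intervalIntegrable (by fun_prop) _ _)
    _ = ε * ∫ y in (0 : ℝ)..T, Real.exp (-(z * y)) := by
        rw [intervalIntegral.integral_mul_const, mul_comm]
    _ ≤ ε * z⁻¹ := by gcongr
    _ = ε * ‖z⁻¹‖ := by rw [Real.norm_of_nonneg (inv_pos.2 hz).le]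

lemma integrableOn_Ioi_cexp_neg_mul_smul (hz : 0 < z) {φ : ℝ → E} (hφ : ContinuousOn φ (Ici 0))
    (hO : φ =O[atTop] fun _ => (1 : ℝ)) :
    IntegrableOn (fun y : ℝ => cexp (-(z * y)) • φ y) (Ioi 0) := by
  have hc : ContinuousOn (fun y : ℝ => cexp (-(z * y)) • φ y) (Ici 0) :=
    Continuous.continuousOn (by fun_prop) |>.smul hφ
  refine (integrable_norm_iff
    ((hc.mono Ioi_subset_Ici_self).aestronglyMeasurable measurableSet_Ioi)).1
    (integrable_of_isBigO_exp_neg hz hc.norm ?_)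
  have hexp : (fun y : ℝ => cexp (-(z * y))) =O[atTop] fun y => Real.exp (-z * y) :=
    .of_norm_le fun y => by simp [Complex.norm_exp]
  simpa using (hexp.smul hO).norm_left

theorem tendsto_integral_cexp_smul_of_quadrant (hz : 0 < z)
    (hc : ContinuousOn g (Ici 0 ×ℂ Ici 0)) (hd : DifferentiableOn ℂ g (Ioi 0 ×ℂ Ioi 0))
    (hg0 : Tendsto g (cobounded ℂ ⊓ 𝓟 (Ici 0 ×ℂ Ici 0)) (𝓝 0)) :
    Tendsto (fun T : ℝ => ∫ x in (0 : ℝ)..T, cexp (I * z * x) • g x) atTop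
      (𝓝 (I • ∫ y in Ioi (0 : ℝ), cexp (-(z * y)) • g (y * I))) := by
  have hcont : ContinuousOn (fun y : ℝ => g (y * I)) (Ici 0) :=
    hc.comp (f := fun y : ℝ => (y * I : ℂ)) (by fun_prop) fun y hy => by
      simpa [mem_reProdIm] using hy
  have hbounded : (fun y : ℝ => g (y * I)) =O[atTop] fun _ => (1 : ℝ) := by
    refine .of_bound 1 ?_
    filter_upwards [eventually_forall_norm_le_of_tendsto_cobounded hg0 one_pos,
      eventually_ge_atTop 0] with y hsmall hy
    simpa using hsmall (y * I) (by simp [mem_reProdIm, hy]) (by simp [abs_of_nonneg hy])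
  have himag := intervalIntegral_tendsto_integral_Ioi 0
    (integrableOn_Ioi_cexp_neg_mul_smul hz hcont hbounded) tendsto_id
  have hsides := (tendsto_integral_cexp_smul_top_side hz hg0).sub
    ((tendsto_integral_cexp_smul_right_side hz hg0).const_smul I)
  rw [smul_zero, sub_zero] at hsides
  have hlim := (himag.const_smul I).add hsides
  rw [add_zero] at hlim
  refine hlim.congr' ?_
  filter_upwards [eventually_ge_atTop 0] with T hT
  have hrotate (y : ℝ) : I * z * (y * I) = -(z * y) := by linear_combination (z * y : ℂ) * I_mul_I
  rw [intervalIntegral_eq_of_differentiableOn_quadrant (f := fun w => cexp (I * z * w) • g w)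
    (Continuous.continuousOn (by fun_prop) |>.smul hc)
    (Differentiable.differentiableOn (by fun_prop) |>.smul hd) hT]
  simp only [hrotate, id_eq]

theorem tendsto_integral_sin_mul_of_quadrant {g : ℂ → ℂ} {f : ℝ → ℝ} (hz : 0 < z)
    (hc : ContinuousOn g (Ici 0 ×ℂ Ici 0)) (hd : DifferentiableOn ℂ g (Ioi 0 ×ℂ Ioi 0))
    (hg0 : Tendsto g (cobounded ℂ ⊓ 𝓟 (Ici 0 ×ℂ Ici 0)) (𝓝 0))
    (hfg : ∀ x : ℝ, 0 ≤ x → g x = f x) :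
    Tendsto (fun T : ℝ => ∫ x in (0 : ℝ)..T, Real.sin (z * x) * f x) atTop
      (𝓝 (∫ y in Ioi (0 : ℝ), cexp (-(z * y)) * g (y * I)).re) := by
  have him := (continuous_im.tendsto _).comp (tendsto_integral_cexp_smul_of_quadrant hz hc hd hg0)
  simp only [smul_eq_mul, I_mul_im] at him
  refine him.congr' ?_
  filter_upwards [eventually_ge_atTop 0] with T hT
  have hcont : ContinuousOn (fun x : ℝ => cexp (I * z * x) * g x) (uIcc 0 T) := by
    rw [uIcc_of_le hT]
    refine Continuous.continuousOn (by fun_prop) |>.mul ?_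
    exact hc.comp (by fun_prop) fun x hx => by simpa [mem_reProdIm] using hx.1
  have hcomm := imCLM.intervalIntegral_comp_comm hcont.intervalIntegrable (μ := volume)
  simp only [imCLM_apply] at hcomm
  rw [Function.comp_apply, ← hcomm]
  refine intervalIntegral.integral_congr fun x hx => ?_
  rw [uIcc_of_le hT] at hx
  have hcexp : I * z * x = ((z * x : ℝ) : ℂ) * I := by push_cast; ring
  simp only [hfg x hx.1, hcexp, im_mul_ofReal, exp_ofReal_mul_I_im]

end QuadrantRotation

section DagumExtension

open Asymptotics Bornology Complex
open scoped Real Topology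

variable {lam δ : ℝ} {u w : ℂ}

lemma one_add_mem_slitPlane_of_arg_lt_pi (hu : u.arg < π) : 1 + u ∈ slitPlane := by
  rw [mem_slitPlane_iff, add_re, add_im, one_re, one_im, zero_add]
  exact (arg_lt_pi_iff.1 hu).imp_left fun hre => by linarith

lemma arg_div_one_add_lt_pi (hu : u.arg < π) : (u / (1 + u)).arg < π := by
  have hdiv : u / (1 + u) = (((‖u‖ ^ 2 : ℝ) : ℂ) + u) * ((normSq (1 + u))⁻¹ : ℝ) := by
    rw [div_eq_mul_inv, inv_def, ← mul_assoc, ← normSq_eq_norm_sq, ← mul_conj]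
    simp only [map_add, map_one]
    ring
  have hpos : 0 < normSq (1 + u) :=
    normSq_pos.2 (slitPlane_ne_zero (one_add_mem_slitPlane_of_arg_lt_pi hu))
  rw [hdiv, arg_mul_real (inv_pos.2 hpos), arg_lt_pi_iff, add_re, add_im, ofReal_re, ofReal_im,
    zero_add]
  exact (arg_lt_pi_iff.1 hu).imp_left fun hre => by positivity

lemma div_cpow_of_im_nonneg {v : ℂ} (hu : u ≠ 0) (hu_im : 0 ≤ u.im) (hv : v ∈ slitPlane)
    (hv_im : 0 ≤ v.im) (a : ℂ) : (u / v) ^ a = u ^ a / v ^ a := by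
  have hv0 := slitPlane_ne_zero hv
  have hargv : v.arg < π := (arg_le_pi v).lt_of_ne (slitPlane_arg_ne_pi hv)
  have harg : u.arg + v⁻¹.arg ∈ Ioc (-π) π := by
    rw [arg_inv, if_neg hargv.ne]
    constructor <;> linarith [arg_nonneg_iff.2 hu_im, arg_nonneg_iff.2 hv_im, arg_le_pi u]
  rw [div_eq_mul_inv, cpow_def_of_ne_zero (mul_ne_zero hu (inv_ne_zero hv0)),
    log_mul hu (inv_ne_zero hv0) harg, add_mul, Complex.exp_add, ← cpow_def_of_ne_zero hu,
    ← cpow_def_of_ne_zero (inv_ne_zero hv0), inv_cpow v a hargv.ne, div_eq_mul_inv]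

lemma abs_arg_mul_lt_pi (hδ : |δ| < 2) (hw : 0 ≤ w.re) : |w.arg * δ| < π := by
  rw [abs_mul]
  nlinarith [abs_arg_le_pi_div_two_iff.2 hw, Real.pi_pos, abs_nonneg δ]

lemma log_mul_ofReal_im (w : ℂ) (δ : ℝ) : (log w * δ).im = w.arg * δ := by
  rw [im_mul_ofReal, log_im]

lemma arg_cpow_ofReal (hw : w ≠ 0) (harg : |w.arg * δ| < π) :
    (w ^ (δ : ℂ)).arg = w.arg * δ := by
  rw [abs_lt, ← log_mul_ofReal_im] at harg
  rw [cpow_def_of_ne_zero hw, ← log_im, log_exp harg.1 harg.2.le, log_mul_ofReal_im]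

lemma arg_cpow_lt_pi (hδ : |δ| < 2) (hw : 0 ≤ w.re) : (w ^ (δ : ℂ)).arg < π := by
  rcases eq_or_ne w 0 with rfl | hw0
  · rcases eq_or_ne δ 0 with rfl | hδ0 <;> simp [*, Real.pi_pos]
  · have harg := abs_arg_mul_lt_pi hδ hw
    rw [arg_cpow_ofReal hw0 harg]
    exact (abs_lt.1 harg).2

lemma ofReal_mul_I_cpow {t : ℝ} (ht : 0 < t) (a : ℂ) :
    (t * I) ^ a = exp (I * π * a / 2) * (t : ℂ) ^ a := by
  have ht0 : (t : ℂ) ≠ 0 := ofReal_ne_zero.2 ht.ne'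
  rw [cpow_def_of_ne_zero (mul_ne_zero ht0 I_ne_zero), log_ofReal_mul ht I_ne_zero, log_I,
    cpow_def_of_ne_zero ht0, ← Complex.exp_add, ofReal_log ht.le]
  congr 1
  ring

/-- The extension of the Dagum function `D_{λ,δ}` to complex arguments, with principal powers. The
quotient is kept inside a single power, since for `0 < δ < 2` it then stays off the branch cut on
the whole half-plane `0 ≤ re w`. -/
noncomputable def dagumComplex (lam δ : ℝ) (w : ℂ) : ℂ :=
  1 - (w ^ (δ : ℂ) / (1 + w ^ (δ : ℂ))) ^ (lam : ℂ)

lemma dagumComplex_ofReal (lam δ : ℝ) {r : ℝ} (hr : 0 ≤ r) :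
    dagumComplex lam δ r = dagum lam δ r := by
  have hpow : 0 ≤ r ^ δ := Real.rpow_nonneg hr δ
  rw [dagumComplex, dagum, ofReal_sub, ofReal_cpow (div_nonneg hpow (by linarith)), ofReal_div,
    ofReal_add, ofReal_cpow hr, ofReal_one]

lemma dagumComplex_ofReal_mul_I (lam : ℝ) (hδ0 : 0 ≤ δ) (hδ2 : δ < 2) {t : ℝ} (ht : 0 < t) :
    dagumComplex lam δ (t * I) = dagumRot lam δ t := by
  have hδ : |δ| < 2 := by rwa [abs_of_nonneg hδ0]
  have hw0 : (t * I : ℂ) ≠ 0 := mul_ne_zero (ofReal_ne_zero.2 ht.ne') I_ne_zero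
  have hre : 0 ≤ (t * I : ℂ).re := by simp
  have harg := abs_arg_mul_lt_pi hδ hre
  have hlog : (log (t * I) * δ).im ∈ Ioo (-π) π := by rwa [log_mul_ofReal_im, mem_Ioo, ← abs_lt]
  have him : 0 ≤ ((t * I : ℂ) ^ (δ : ℂ)).im := by
    rw [← arg_nonneg_iff, arg_cpow_ofReal hw0 harg]
    exact mul_nonneg (arg_nonneg_iff.2 (by simpa using ht.le)) hδ0
  have hpow : (t * I : ℂ) ^ ((δ * lam : ℝ) : ℂ) = ((t * I : ℂ) ^ (δ : ℂ)) ^ (lam : ℂ) := by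
    rw [ofReal_mul, cpow_mul _ hlog.1 hlog.2.le]
  rw [dagumComplex, div_cpow_of_im_nonneg (by simp [hw0]) him
    (one_add_mem_slitPlane_of_arg_lt_pi (arg_cpow_lt_pi hδ hre)) (by simpa using him),
    ← hpow, ofReal_mul_I_cpow ht, ofReal_mul_I_cpow ht, dagumRot, ofReal_mul]

lemma continuousAt_dagumComplex (hlam : 0 < lam) (hδ0 : 0 < δ) (hδ2 : δ < 2) (hw : 0 ≤ w.re) :
    ContinuousAt (dagumComplex lam δ) w := by
  have harg := arg_cpow_lt_pi (abs_of_pos hδ0 ▸ hδ2) hw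
  have hpow : ContinuousAt (fun v : ℂ => v ^ (δ : ℂ)) w :=
    continuousAt_cpow_const_of_re_pos (.inl hw) (by simpa using hδ0)
  have hquot : ContinuousAt (fun v : ℂ => v ^ (δ : ℂ) / (1 + v ^ (δ : ℂ))) w :=
    hpow.div (continuousAt_const.add hpow)
      (slitPlane_ne_zero (one_add_mem_slitPlane_of_arg_lt_pi harg))
  have houter : ContinuousAt (fun v : ℂ => v ^ (lam : ℂ)) (w ^ (δ : ℂ) / (1 + w ^ (δ : ℂ))) :=
    continuousAt_cpow_const_of_re_pos (arg_lt_pi_iff.1 (arg_div_one_add_lt_pi harg))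
      (by simpa using hlam)
  exact continuousAt_const.sub
    (houter.comp (f := fun v : ℂ => v ^ (δ : ℂ) / (1 + v ^ (δ : ℂ))) hquot)

lemma differentiableAt_dagumComplex (lam : ℝ) (hδ : |δ| < 2) (hw : 0 < w.re) :
    DifferentiableAt ℂ (dagumComplex lam δ) w := by
  have harg := arg_cpow_lt_pi hδ hw.le
  have hden := slitPlane_ne_zero (one_add_mem_slitPlane_of_arg_lt_pi harg)
  have hpow : DifferentiableAt ℂ (fun v : ℂ => v ^ (δ : ℂ)) w :=
    differentiableAt_id.cpow_const (.inl hw)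
  have hw0 : w ^ (δ : ℂ) ≠ 0 := by
    simp [slitPlane_ne_zero (.inl hw : w ∈ slitPlane)]
  have hquot : w ^ (δ : ℂ) / (1 + w ^ (δ : ℂ)) ∈ slitPlane :=
    mem_slitPlane_iff_arg.2 ⟨(arg_div_one_add_lt_pi harg).ne, div_ne_zero hw0 hden⟩
  exact ((hpow.div (hpow.const_add 1) hden).cpow_const hquot).const_sub 1

lemma dagumComplex_isBigO_cobounded (lam : ℝ) (hδ0 : 0 < δ) :
    dagumComplex lam δ =O[cobounded ℂ] fun w => ‖w‖ ^ (-δ) := by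
  have hdiff : DifferentiableAt ℂ (fun v : ℂ => 1 - (1 + v)⁻¹ ^ (lam : ℂ)) 0 :=
    (((differentiableAt_id.const_add 1).inv (by simp)).cpow_const (by simp)).const_sub 1
  have hO : (fun v : ℂ => 1 - (1 + v)⁻¹ ^ (lam : ℂ)) =O[𝓝 0] fun v => v := by
    simpa using hdiff.isBigO_sub
  have hnorm (w : ℂ) : ‖(w ^ (δ : ℂ))⁻¹‖ = ‖w‖ ^ (-δ) := by
    rw [norm_inv, norm_cpow_real, Real.rpow_neg (norm_nonneg w)]
  have hinv : Tendsto (fun w : ℂ => (w ^ (δ : ℂ))⁻¹) (cobounded ℂ) (𝓝 0) := by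
    rw [tendsto_zero_iff_norm_tendsto_zero]
    simp only [hnorm]
    exact (tendsto_rpow_neg_atTop hδ0).comp tendsto_norm_cobounded_atTop
  refine (hO.comp_tendsto hinv).norm_right.congr' ?_ (.of_forall hnorm)
  filter_upwards [eventually_ne_cobounded 0] with w hw
  have hw0 : w ^ (δ : ℂ) ≠ 0 := by simp [hw]
  have hquot : (1 + (w ^ (δ : ℂ))⁻¹)⁻¹ = w ^ (δ : ℂ) / (1 + w ^ (δ : ℂ)) := by
    rw [← inv_div, add_div, div_self hw0, one_div, add_comm]
  simp only [Function.comp_apply, hquot, dagumComplex]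

lemma tendsto_mul_dagumComplex_cobounded (lam : ℝ) (hδ1 : 1 < δ) :
    Tendsto (fun w => w * dagumComplex lam δ w) (cobounded ℂ) (𝓝 0) := by
  have hO : (fun w => w * dagumComplex lam δ w) =O[cobounded ℂ] fun w => ‖w‖ * ‖w‖ ^ (-δ) :=
    (isBigO_refl (fun w : ℂ => w) _).norm_right.mul
      (dagumComplex_isBigO_cobounded lam (one_pos.trans hδ1))
  have hpow : Tendsto (fun x : ℝ => x * x ^ (-δ)) atTop (𝓝 0) := by
    refine (tendsto_rpow_neg_atTop (sub_pos.2 hδ1)).congr' ?_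
    filter_upwards [eventually_gt_atTop 0] with x hx
    rw [neg_sub, sub_eq_add_neg, Real.rpow_add hx, Real.rpow_one]
  exact hO.trans_tendsto (hpow.comp tendsto_norm_cobounded_atTop)

lemma integral_cexp_mul_dagumComplex_ofReal_mul_I (lam z : ℝ) (hδ0 : 0 ≤ δ) (hδ2 : δ < 2) :
    ∫ t in Ioi (0 : ℝ), exp (-(z * t)) * ((t * I) * dagumComplex lam δ (t * I)) =
      I * ∫ t in Ioi (0 : ℝ), exp (-(z * t)) * (t : ℂ) * dagumRot lam δ t := by
  rw [← MeasureTheory.integral_const_mul]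
  refine setIntegral_congr_fun measurableSet_Ioi fun t ht => ?_
  simp only [dagumComplex_ofReal_mul_I lam hδ0 hδ2 ht]
  ring

end DagumExtension

theorem dagum_spectral_density_dim_three_general (δ lam : ℝ) (hδ1 : 1 < δ) (hδ2 : δ < 2)
    (hlam : 0 < lam) (z : ℝ) (hz : 0 < z) :
    Tendsto (fun T : ℝ =>
        (1 / (2 * Real.pi ^ 2 * z)) * ∫ r in (0 : ℝ)..T, r * Real.sin (z * r) * dagum lam δ r)
      atTop
      (nhds (-(1 / (2 * Real.pi ^ 2 * z)) *
        (∫ t in Ioi (0 : ℝ), Complex.exp (-(z * t)) * (t : ℂ) * dagumRot lam δ t).im)) := by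
  have hδ0 : 0 < δ := one_pos.trans hδ1
  have hδ : |δ| < 2 := by rwa [abs_of_pos hδ0]
  have hcont : ContinuousOn (fun w => w * dagumComplex lam δ w) (Ici 0 ×ℂ Ici 0) := fun w hw =>
    (continuousAt_id.mul (continuousAt_dagumComplex hlam hδ0 hδ2 hw.1)).continuousWithinAt
  have hdiff : DifferentiableOn ℂ (fun w => w * dagumComplex lam δ w) (Ioi 0 ×ℂ Ioi 0) :=
    fun w hw => (differentiableAt_id.mul
      (differentiableAt_dagumComplex lam hδ hw.1)).differentiableWithinAt
  have hdecay := (tendsto_mul_dagumComplex_cobounded lam hδ1).mono_left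
    (inf_le_left (b := 𝓟 (Ici 0 ×ℂ Ici 0)))
  have hreal (r : ℝ) (hr : 0 ≤ r) : r * dagumComplex lam δ r = ((r * dagum lam δ r : ℝ) : ℂ) := by
    rw [dagumComplex_ofReal lam δ hr, Complex.ofReal_mul]
  have hlim := tendsto_integral_sin_mul_of_quadrant hz hcont hdiff hdecay hreal
  rw [integral_cexp_mul_dagumComplex_ofReal_mul_I lam z hδ0.le hδ2, Complex.I_mul_re] at hlim
  have hscaled := hlim.const_mul (1 / (2 * Real.pi ^ 2 * z))
  rw [mul_neg, ← neg_mul] at hscaled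
  refine hscaled.congr fun T => ?_
  congr 2 with r
  ring

/-- For `d = 3`, `δ ∈ (1,2)`, `λ > 0` with `δλ ∈ (0,2)` and `z > 0`, the improper radial
Fourier transform `(1/(2π²z)) lim_{T→∞} ∫₀^T r sin(zr) D_{λ,δ}(r) dr` exists and equals
`-(1/(2π²z)) Im ∫₀^∞ e^{-zt} t (1 - e^{iπδλ/2} t^{δλ}/(1+e^{iπδ/2} t^δ)^λ) dt`. -/
theorem dagum_spectral_density_dim_three (δ lam : ℝ) (hδ1 : 1 < δ) (hδ2 : δ < 2)
    (hlam : 0 < lam) (hdl0 : 0 < δ * lam) (hdl2 : δ * lam < 2) (z : ℝ) (hz : 0 < z) :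
    Tendsto (fun T : ℝ =>
        (1 / (2 * Real.pi ^ 2 * z)) * ∫ r in (0 : ℝ)..T, r * Real.sin (z * r) * dagum lam δ r)
      atTop
      (nhds (-(1 / (2 * Real.pi ^ 2 * z)) *
        (∫ t in Ioi (0 : ℝ), Complex.exp (-(z * t)) * (t : ℂ) * dagumRot lam δ t).im)) :=
  dagum_spectral_density_dim_three_general δ lam hδ1 hδ2 hlam z hz
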